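/- Let $n \ge 2$, $p \ge 1$, and $v^1,\dots,v^p \in \mathbb{R}^n$. Let $P$ be the tropical polytope generated by these points, i.e. the set of all $x \in \mathbb{R}^n$ for which there is $\lambda \in \mathbb{R}^p$ with $x_i = \max_{1 \le r \le p} (\lambda_r + v^r_i)$ for all $i \in \{1,\dots,n\}$. Say that $P$ is pure if $P_0 := \{x \in P : x_1 = 0\}$ equals the closure of its interior, both taken relative to the hyperplane $\{x \in \mathbb{R}^n : x_1 = 0\}$. For $a \in \mathbb{R}^n$ and a nonempty proper subset $I \subset \{1,\dots,n\}$, let $$H(a,I) := \{x \in \mathbb{R}^n : \max_{i \in I}(x_i - a_i) \ge \max_{j \notin I}(x_j - a_j)\},$$ and for $i \in \{1,\dots,n\}$ let $S_i(a) := \{r : v^r_i - a_i \ge v^r_k - a_k \text{ for all } k \in \{1,\dots,n\}\}$. For a nonempty proper subset $I \subset \{1,\dots,n\}$ and $j \in \{1,\dots,n\} \setminus I$, call $a$ an $(I,j)$-pseudovertex of $P$ if (i) $\bigcup_{i \in I} S_i(a) = \{1,\dots,p\}$; (ii) for each $k \in \{1,\dots,n\} \setminus I$ there is $i \in I$ with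 $S_i(a) \cap S_k(a) \ne \emptyset$; (iii) for each $i \in I$, $S_i(a) \cap S_j(a) \not\subseteq \bigcup_{h \in I \setminus \{i\}} S_h(a)$. If $P$ is pure, then the set of all half-spaces $H(a,I)$ such that $a$ is an $(I,j)$-pseudovertex of $P$ for some nonempty proper subset $I \subset \{1,\dots,n\}$ and some $j \in \{1,\dots,n\} \setminus I$ is finite, and $P$ equals the intersection of these half-spaces. -/

import Mathlib

/-- The sector `S(a,i) = {x | x_i - a_i ≥ x_j - a_j for all j}`. -/
def sector {n : ℕ} (a : Fin n → ℝ) (i : Fin n) : Set (Fin n → ℝ) :=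
  {x | ∀ j, x j - a j ≤ x i - a i}

/-- The tropical polytope generated by the points `v 0, …, v (p-1)`: the points `x` for which
there are scalars `l r` such that each coordinate `x i` is the maximum over `r` of `l r + v r i`. -/
def tropPoly {n p : ℕ} (v : Fin p → Fin n → ℝ) : Set (Fin n → ℝ) :=
  {x | ∃ l : Fin p → ℝ, ∀ i, IsGreatest (Set.range fun r => l r + v r i) (x i)}

/-- The tropical half-space `H(a,I)`: `max_{i ∈ I} (x_i - a_i) ≥ max_{j ∉ I} (x_j - a_j)`,
for a nonempty proper subset `I`. -/
def halfSpace {n : ℕ} (a : Fin n → ℝ) (I : Set (Fin n)) : Set (Fin n → ℝ) :=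
  {x | ∃ i ∈ I, ∀ j ∉ I, x j - a j ≤ x i - a i}

/-- `S_i(a)`, the set of indices `r` such that `v r ∈ S(a,i)`. -/
def typeSet {n p : ℕ} (v : Fin p → Fin n → ℝ) (a : Fin n → ℝ) (i : Fin n) : Set (Fin p) :=
  {r | v r ∈ sector a i}

/-- `a` is an `(I,j)`-pseudovertex of the tropical polytope generated by `v`, where `I` is a
nonempty proper subset of the index set and `j ∉ I`. -/
structure IsPseudovertex {n p : ℕ} (v : Fin p → Fin n → ℝ) (a : Fin n → ℝ) (I : Set (Fin n))
    (j : Fin n) : Prop where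
  nonempty : I.Nonempty
  proper : I ≠ Set.univ
  notMem : j ∉ I
  cover : (⋃ i ∈ I, typeSet v a i) = Set.univ
  touch : ∀ k ∉ I, ∃ i ∈ I, (typeSet v a i ∩ typeSet v a k).Nonempty
  tight : ∀ i ∈ I, ¬ typeSet v a i ∩ typeSet v a j ⊆ ⋃ h ∈ I \ {i}, typeSet v a h

/-- The set of all half-spaces `H(a,I)` such that `a` is an `(I,j)`-pseudovertex for some `j`. -/
def pseudovertexHalfSpaces {n p : ℕ} (v : Fin p → Fin n → ℝ) : Set (Set (Fin n → ℝ)) :=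
  {H | ∃ (a : Fin n → ℝ) (I : Set (Fin n)) (j : Fin n), IsPseudovertex v a I j ∧ H = halfSpace a I}

/-- `P` is pure: `P₀ = {x ∈ P | x 0 = 0}` equals the closure of its interior, relative to
the hyperplane `{x | x 0 = 0}` with the subspace topology. -/
def IsPure {n : ℕ} [NeZero n] (P : Set (Fin n → ℝ)) : Prop :=
  letI P₀ : Set {x : Fin n → ℝ // x 0 = 0} := {x | (x : Fin n → ℝ) ∈ P}
  P₀ = closure (interior P₀)

theorem mem_tropPoly_of_forall_typeSet_nonempty {n p : ℕ} [NeZero n] (v : Fin p → Fin n → ℝ)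
    (y : Fin n → ℝ) (h : ∀ j, (typeSet v y j).Nonempty) : y ∈ tropPoly v := by
  refine ⟨fun r => Finset.univ.inf' Finset.univ_nonempty fun k => y k - v r k, fun i => ?_⟩
  have hle : ∀ r k, (Finset.univ.inf' Finset.univ_nonempty fun k => y k - v r k) ≤ y k - v r k :=
    fun r k => Finset.inf'_le _ (Finset.mem_univ k)
  constructor
  · obtain ⟨r, hr⟩ := h i
    refine ⟨r, ?_⟩
    have h1 : y i - v r i ≤ Finset.univ.inf' Finset.univ_nonempty fun k => y k - v r k :=
      Finset.le_inf' _ _ fun k _ => by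
        have := hr k
        linarith
    have h2 := hle r i
    change (Finset.univ.inf' Finset.univ_nonempty fun k => y k - v r k) + v r i = y i
    linarith
  · rintro _ ⟨r, rfl⟩
    have h2 := hle r i
    change (Finset.univ.inf' Finset.univ_nonempty fun k => y k - v r k) + v r i ≤ y i
    linarith

theorem tropPoly_subset_halfSpace {n p : ℕ} (v : Fin p → Fin n → ℝ) (a : Fin n → ℝ)
    (I : Set (Fin n)) (hI : I.Nonempty) (hcover : (⋃ i ∈ I, typeSet v a i) = Set.univ) :
    tropPoly v ⊆ halfSpace a I := by
  rintro x ⟨l, hl⟩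
  obtain ⟨i, hi, hmax⟩ := Set.exists_max_image I (fun i => x i - a i) I.toFinite hI
  refine ⟨i, hi, fun k _ => ?_⟩
  obtain ⟨r, hr⟩ := (hl k).1
  have hmem : r ∈ ⋃ i ∈ I, typeSet v a i := hcover ▸ Set.mem_univ r
  simp only [Set.mem_iUnion] at hmem
  obtain ⟨h, hh, hrh⟩ := hmem
  have h1 := hrh k
  have h2 : l r + v r h ≤ x h := (hl h).2 ⟨r, rfl⟩
  have h3 := hmax h hh
  dsimp only at hr h3
  linarith

theorem halfSpace_sub_const {n : ℕ} (a : Fin n → ℝ) (I : Set (Fin n)) (c : ℝ) :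
    halfSpace (fun k => a k - c) I = halfSpace a I := by
  ext x
  refine exists_congr fun i => and_congr_right fun _ => forall₂_congr fun j _ => ?_
  constructor <;> intro h <;> linarith

theorem sub_eq_sub_of_mem_typeSet {n p : ℕ} {v : Fin p → Fin n → ℝ} {a : Fin n → ℝ} {i k : Fin n}
    {r : Fin p} (hi : r ∈ typeSet v a i) (hk : r ∈ typeSet v a k) : a k - a i = v r k - v r i := by
  have h1 := hi k
  have h2 := hk i
  linarith

theorem finite_pseudovertexHalfSpaces {n p : ℕ} (v : Fin p → Fin n → ℝ) :
    (pseudovertexHalfSpaces v).Finite := by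
  let F : Fin n → Set ℝ := fun k =>
    Set.range fun q : (Fin p × Fin p) × (Fin n × Fin n) =>
      (v q.1.1 q.2.1 - v q.1.1 q.2.2) + (v q.1.2 k - v q.1.2 q.2.1)
  have hF : (Set.univ.pi F).Finite := Set.Finite.pi fun k => Set.finite_range _
  refine (Set.Finite.image2 halfSpace hF (Set.finite_univ (α := Set (Fin n)))).subset ?_
  rintro _ ⟨a, I, j, h, rfl⟩
  refine ⟨fun k => a k - a j, fun k _ => ?_, I, Set.mem_univ I, halfSpace_sub_const a I (a j)⟩
  have key : ∀ i ∈ I, ∃ r, a i - a j = v r i - v r j := fun i hi => by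
    obtain ⟨r, hr, -⟩ := Set.not_subset.1 (h.tight i hi)
    exact ⟨r, sub_eq_sub_of_mem_typeSet hr.2 hr.1⟩
  by_cases hk : k ∈ I
  · obtain ⟨r, hr⟩ := key k hk
    refine ⟨((r, r), (k, j)), ?_⟩
    dsimp only
    linarith
  · obtain ⟨i, hi, s, hsi, hsk⟩ := h.touch k hk
    obtain ⟨r, hr⟩ := key i hi
    have hs := sub_eq_sub_of_mem_typeSet hsi hsk
    refine ⟨((r, s), (i, j)), ?_⟩
    dsimp only
    linarith

/-- A system of thresholds `b` on `I` that every row of `w` meets somewhere, and that `z` misses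
everywhere, can be made irredundant by raising thresholds and shrinking `I`. -/
theorem exists_irredundant_thresholds {ι κ : Type*} [DecidableEq ι] [Finite κ] (w : κ → ι → ℝ)
    (z : ι → ℝ) (I₀ : Finset ι) (b₀ : ι → ℝ) (hvalid : ∀ r, ∃ i ∈ I₀, b₀ i ≤ w r i)
    (hz : ∀ i ∈ I₀, z i < b₀ i) :
    ∃ I ⊆ I₀, ∃ b : ι → ℝ, (∀ r, ∃ i ∈ I, b i ≤ w r i) ∧ (∀ i ∈ I, z i < b i) ∧
      ∀ i ∈ I, ∃ r, w r i = b i ∧ ∀ h ∈ I, h ≠ i → w r h < b h := by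
  suffices H : ∀ T : Finset ι, ∃ I ⊆ I₀, ∃ b : ι → ℝ, (∀ r, ∃ i ∈ I, b i ≤ w r i) ∧
      (∀ i ∈ I, z i < b i) ∧
      ∀ i ∈ I, i ∈ T → ∃ r, w r i = b i ∧ ∀ h ∈ I, h ≠ i → w r h < b h by
    obtain ⟨I, hI, b, h1, h2, h3⟩ := H I₀
    exact ⟨I, hI, b, h1, h2, fun i hi => h3 i hi (hI hi)⟩
  intro T
  induction T using Finset.induction_on with
  | empty => exact ⟨I₀, subset_rfl, b₀, hvalid, hz, fun i _ hi => absurd hi (Finset.notMem_empty i)⟩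
  | insert t T _ ih =>
    obtain ⟨I, hI, b, h1, h2, h3⟩ := ih
    by_cases htI : t ∈ I
    swap
    · refine ⟨I, hI, b, h1, h2, fun i hi hiT => h3 i hi ?_⟩
      rcases Finset.mem_insert.1 hiT with rfl | h
      · exact absurd hi htI
      · exact h
    let R : Set κ := {r | ∀ h ∈ I, h ≠ t → w r h < b h}
    rcases R.eq_empty_or_nonempty with hR | hR
    · refine ⟨I.erase t, (Finset.erase_subset t I).trans hI, b, fun r => ?_,
        fun i hi => h2 i (Finset.mem_of_mem_erase hi), fun i hi hiT => ?_⟩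
      · have hr : r ∉ R := hR ▸ Set.notMem_empty r
        simp only [R, Set.mem_ofPred_eq, not_forall, not_lt] at hr
        obtain ⟨h, hh, hne, hle⟩ := hr
        exact ⟨h, Finset.mem_erase.2 ⟨hne, hh⟩, hle⟩
      · obtain ⟨hne, hiI⟩ := Finset.mem_erase.1 hi
        obtain ⟨r, hr, hr'⟩ := h3 i hiI ((Finset.mem_insert.1 hiT).resolve_left hne)
        exact ⟨r, hr, fun h hh => hr' h (Finset.mem_of_mem_erase hh)⟩
    · obtain ⟨s, hs, hmin⟩ := Set.exists_min_image R (fun r => w r t) R.toFinite hR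
      have hle : b t ≤ w s t := by
        obtain ⟨i, hi, hbi⟩ := h1 s
        by_cases hit : i = t
        · exact hit ▸ hbi
        · exact absurd (hs i hi hit) (not_lt.2 hbi)
      have hmono : ∀ h, b h ≤ Function.update b t (w s t) h := fun h => by
        by_cases hht : h = t
        · subst hht
          simpa using hle
        · simp [hht]
      refine ⟨I, hI, Function.update b t (w s t), fun r => ?_,
        fun i hi => (h2 i hi).trans_le (hmono i), fun i hi hiT => ?_⟩
      · by_cases hr : r ∈ R
        · exact ⟨t, htI, by simpa using hmin r hr⟩
        · simp only [R, Set.mem_ofPred_eq, not_forall, not_lt] at hr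
          obtain ⟨h, hh, hne, hbh⟩ := hr
          exact ⟨h, hh, by simpa [hne] using hbh⟩
      · by_cases hit : i = t
        · subst hit
          exact ⟨s, by simp, fun h hh hne => (hs h hh hne).trans_le (hmono h)⟩
        · obtain ⟨r, hr, hr'⟩ := h3 i hi ((Finset.mem_insert.1 hiT).resolve_left hit)
          exact ⟨r, by simpa [hit] using hr, fun h hh hne => (hr' h hh hne).trans_le (hmono h)⟩

/-- An irredundant inequality `x j ≤ max_{i ∈ I} (x i - b i)` valid on all the generators comes from
an `(I,j)`-pseudovertex: the missing coordinates are chosen as small as possible. -/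
theorem exists_isPseudovertex_of_irredundant {n p : ℕ} [NeZero p] (v : Fin p → Fin n → ℝ)
    (I : Finset (Fin n)) (j : Fin n) (hj : j ∉ I) (b : Fin n → ℝ)
    (hvalid : ∀ r, ∃ i ∈ I, b i ≤ v r i - v r j)
    (htight : ∀ i ∈ I, ∃ r, v r i - v r j = b i ∧ ∀ h ∈ I, h ≠ i → v r h - v r j < b h) :
    ∃ a : Fin n → ℝ, a j = 0 ∧ (∀ i ∈ I, a i = b i) ∧ IsPseudovertex v a (I : Set (Fin n)) j := by
  have hI : I.Nonempty := (hvalid 0).imp fun _ h => h.1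
  let m : Fin p → ℝ := fun r => I.sup' hI fun i => v r i - b i
  have hm_le : ∀ r, ∀ i ∈ I, v r i - b i ≤ m r := fun r i hi =>
    Finset.le_sup' (fun i => v r i - b i) hi
  have hm_eq : ∀ r, ∃ i ∈ I, m r = v r i - b i := fun r =>
    Finset.exists_mem_eq_sup' hI fun i => v r i - b i
  let a : Fin n → ℝ := fun k => if k ∈ I then b k else
    Finset.univ.sup' Finset.univ_nonempty fun r => v r k - m r
  have haI : ∀ i ∈ I, a i = b i := fun i hi => if_pos hi
  have ha : ∀ k ∉ I, a k = Finset.univ.sup' Finset.univ_nonempty fun r => v r k - m r :=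
    fun k hk => if_neg hk
  have ham : ∀ r k, v r k - a k ≤ m r := fun r k => by
    by_cases hk : k ∈ I
    · rw [haI k hk]
      exact hm_le r k hk
    · have := Finset.le_sup' (fun r => v r k - m r) (Finset.mem_univ r)
      rw [← ha k hk] at this
      linarith
  have hmem : ∀ r k, r ∈ typeSet v a k ↔ v r k - a k = m r := fun r k => by
    constructor
    · intro h
      obtain ⟨i, hi, hmi⟩ := hm_eq r
      have h1 := h i
      rw [haI i hi] at h1
      exact le_antisymm (ham r k) (hmi ▸ h1)
    · intro h l
      rw [h]
      exact ham r l
  have hmtight : ∀ i ∈ I, ∃ r, m r = v r j ∧ v r i - b i = m r ∧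
      ∀ h ∈ I, h ≠ i → v r h - b h < m r := fun i hi => by
    obtain ⟨r, hr, hr'⟩ := htight i hi
    have hmr : m r = v r j := by
      refine le_antisymm (Finset.sup'_le _ _ fun h hh => ?_) ?_
      · by_cases hhi : h = i
        · subst hhi
          linarith
        · linarith [hr' h hh hhi]
      · linarith [hm_le r i hi]
    exact ⟨r, hmr, by linarith, fun h hh hne => by linarith [hr' h hh hne]⟩
  have haj : a j = 0 := by
    obtain ⟨i, hi⟩ := hI
    obtain ⟨r, hr, -⟩ := hmtight i hi
    refine le_antisymm ?_ (by linarith [ham r j])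
    rw [ha j hj]
    refine Finset.sup'_le _ _ fun s _ => ?_
    obtain ⟨h, hh, hle⟩ := hvalid s
    linarith [hm_le s h hh]
  refine ⟨a, haj, haI, ⟨hI, fun h => hj ?_, hj, ?_, fun k hk => ?_, fun i hi hsub => ?_⟩⟩
  · exact Finset.mem_coe.1 (h ▸ Set.mem_univ j)
  · refine Set.eq_univ_of_forall fun r => ?_
    obtain ⟨i, hi, hmi⟩ := hm_eq r
    exact Set.mem_biUnion (Finset.mem_coe.2 hi) ((hmem r i).2 (by rw [haI i hi, hmi]))
  · obtain ⟨r, -, hr⟩ := Finset.exists_mem_eq_sup' Finset.univ_nonempty fun r => v r k - m r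
    rw [← ha k hk] at hr
    obtain ⟨i, hi, hmi⟩ := hm_eq r
    exact ⟨i, hi, r, (hmem r i).2 (by rw [haI i hi, hmi]), (hmem r k).2 (by linarith)⟩
  · obtain ⟨r, hr, hri, hrh⟩ := hmtight i hi
    have h1 := hsub ⟨(hmem r i).2 (by rw [haI i hi, hri]), (hmem r j).2 (by rw [haj, hr, sub_zero])⟩
    simp only [Set.mem_iUnion] at h1
    obtain ⟨h, ⟨hh, hne⟩, hrh'⟩ := h1
    have h2 := (hmem r h).1 hrh'
    rw [haI h hh] at h2
    exact absurd h2 (hrh h hh hne).ne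

theorem exists_pseudovertex_halfSpace_separating {n p : ℕ} [NeZero n] [NeZero p]
    (v : Fin p → Fin n → ℝ) (y : Fin n → ℝ) (hy : y ∉ tropPoly v) :
    ∃ H ∈ pseudovertexHalfSpaces v, y ∉ H := by
  obtain ⟨j, hj⟩ : ∃ j, ∀ r, ∃ i, v r j - y j < v r i - y i := by
    by_contra! hcon
    exact hy (mem_tropPoly_of_forall_typeSet_nonempty v y hcon)
  choose g hg using hj
  obtain ⟨s, hs⟩ := Finite.exists_min fun r => (v r (g r) - y (g r)) - (v r j - y j)
  set ε := (v s (g s) - y (g s)) - (v s j - y j) with hε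
  have hε0 : 0 < ε := sub_pos.2 (hg s)
  obtain ⟨I, hI, b, h1, h2, h3⟩ := exists_irredundant_thresholds (fun r i => v r i - v r j)
    (fun i => y i - y j) (Finset.univ.erase j) (fun i => y i - y j + ε)
    (fun r => ⟨g r, Finset.mem_erase.2 ⟨fun h => (hg r).ne (by rw [h]), Finset.mem_univ _⟩, by
      have := hs r
      linarith⟩)
    (fun i _ => by linarith)
  have hjI : j ∉ I := fun h => Finset.notMem_erase j _ (hI h)
  obtain ⟨a, haj, haI, ha⟩ := exists_isPseudovertex_of_irredundant v I j hjI b h1 h3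
  refine ⟨halfSpace a I, ⟨a, I, j, ha, rfl⟩, ?_⟩
  rintro ⟨i, hi, hle⟩
  have h4 := hle j hjI
  have h5 := h2 i hi
  rw [haI i hi, haj] at h4
  linarith

/-- The external representation by pseudovertex half-spaces does not require purity. -/
theorem tropPoly_eq_sInter_pseudovertexHalfSpaces {n p : ℕ} [NeZero n] [NeZero p]
    (v : Fin p → Fin n → ℝ) : tropPoly v = ⋂₀ pseudovertexHalfSpaces v := by
  refine subset_antisymm (Set.subset_sInter ?_) fun y hy => ?_
  · rintro _ ⟨a, I, j, h, rfl⟩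
    exact tropPoly_subset_halfSpace v a I h.nonempty h.cover
  · by_contra hcon
    obtain ⟨H, hH, hyH⟩ := exists_pseudovertex_halfSpace_separating v y hcon
    exact hyH (hy H hH)

/-- If the tropical polytope `P` generated by `p ≥ 1` points is pure, then the half-spaces `H(a,I)`
associated with the `(I,j)`-pseudovertices `a` of `P` form an external representation of `P`:
there are finitely many of them, and their intersection is `P`. -/
theorem pure_eq_sInter_pseudovertex_halfspaces {n p : ℕ} [NeZero n] (hn : 2 ≤ n) (hp : 1 ≤ p)
    (v : Fin p → Fin n → ℝ) (hpure : IsPure (tropPoly v)) :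
    (pseudovertexHalfSpaces v).Finite ∧ tropPoly v = ⋂₀ pseudovertexHalfSpaces v := by
  have : NeZero p := ⟨Nat.one_le_iff_ne_zero.1 hp⟩
  exact ⟨finite_pseudovertexHalfSpaces v, tropPoly_eq_sInter_pseudovertexHalfSpaces v⟩
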